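/- For every s > 0 and every x with |x| < √s, the Hilbert transform of the semicircle density u(y) = (2/π)·√(s−y²)·χ_{|y|≤√s} satisfies Hu(x) = 2x/π. -/

import Mathlib

open MeasureTheory Real Filter Topology Set

/-- Chebyshev polynomial of the first kind, `T_k`, evaluated at a real number. -/
noncomputable def chebT (k : ℕ) (x : ℝ) : ℝ := (Polynomial.Chebyshev.T ℝ k).eval x

/-- Chebyshev polynomial of the second kind, `U_k`, evaluated at a real number. -/
noncomputable def chebU (k : ℕ) (x : ℝ) : ℝ := (Polynomial.Chebyshev.U ℝ k).eval x

/-- `HasHilbertTransform f x L` means the Hilbert transform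
`Hf(x) = (1/π) · p.v. ∫ f(y)/(x−y) dy` exists and equals `L`, the principal value
being the limit as `ε → 0⁺` of the integral over `{y : |x−y| > ε}`. -/
def HasHilbertTransform (f : ℝ → ℝ) (x L : ℝ) : Prop :=
  Tendsto (fun ε : ℝ => (1 / π) * ∫ y in {y : ℝ | ε < |x - y|}, f y / (x - y))
    (𝓝[>] 0) (𝓝 L)

/-!
Subtract the singularity. Put `ρ y = √(r² - y²)`. As `ρ y ^ 2 - ρ x ^ 2 = (x - y) * (x + y)`,
`ρ y / (x - y) = ρ x / (x - y) + (x + y) / (ρ y + ρ x)`, and the last term is continuous in `y`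
on `[-r, r]`. Over `[-r, r]` the first term has principal value `ρ x * log ((r + x) / (r - x))`,
and the second has integral `π * x - ρ x * log ((r + x) / (r - x))`, so the logarithms cancel.
-/

section HilbertTransform

variable {f g h : ℝ → ℝ} {a b c x ε K L : ℝ}

lemma measurableSet_lt_abs_sub : MeasurableSet {y : ℝ | ε < |x - y|} :=
  (isOpen_lt continuous_const (by fun_prop)).measurableSet

lemma sub_ne_zero_of_lt_abs_sub {y : ℝ} (hε : 0 < ε) (hy : ε < |x - y|) : x - y ≠ 0 :=
  abs_pos.1 (hε.trans hy)

lemma integrableOn_div_sub_of_integrable {μ : Measure ℝ} (hf : Integrable f μ) (hε : 0 < ε) :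
    IntegrableOn (fun y => f y / (x - y)) {y | ε < |x - y|} μ := by
  have hbound : ∀ᵐ y ∂μ.restrict {y | ε < |x - y|}, ‖(x - y)⁻¹‖ ≤ ε⁻¹ := by
    filter_upwards [ae_restrict_mem measurableSet_lt_abs_sub] with y hy
    rw [norm_inv, Real.norm_eq_abs]
    exact inv_anti₀ hε (le_of_lt hy)
  simpa only [div_eq_mul_inv, IntegrableOn] using
    hf.integrableOn.mul_bdd (by fun_prop) hbound

namespace HasHilbertTransform

lemma const_mul (c : ℝ) (hf : HasHilbertTransform f x L) :
    HasHilbertTransform (fun y => c * f y) x (c * L) := by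
  refine (Tendsto.const_mul c hf).congr fun ε => ?_
  simp only [mul_div_assoc, integral_const_mul]
  ring

lemma add (hf : HasHilbertTransform f x K) (hg : HasHilbertTransform g x L)
    (hfi : Integrable f) (hgi : Integrable g) :
    HasHilbertTransform (fun y => f y + g y) x (K + L) := by
  refine (Tendsto.add hf hg).congr' ?_
  filter_upwards [self_mem_nhdsWithin] with ε hε
  simp only [add_div]
  rw [integral_add (integrableOn_div_sub_of_integrable hfi hε)
    (integrableOn_div_sub_of_integrable hgi hε), mul_add]

end HasHilbertTransform

lemma aecover_lt_abs_sub {μ : Measure ℝ} [NullSingletonClass μ] :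
    AECover μ (𝓝[>] 0) fun ε : ℝ => {y : ℝ | ε < |x - y|} where
  ae_eventually_mem := by
    filter_upwards [Measure.ae_ne μ x] with y hy
    exact nhdsWithin_le_nhds (Iio_mem_nhds (abs_pos.2 (sub_ne_zero.2 hy.symm)))
  measurableSet _ := measurableSet_lt_abs_sub

lemma hasHilbertTransform_sub_mul (hg : Integrable g) :
    HasHilbertTransform (fun y => (x - y) * g y) x ((1 / π) * ∫ y, g y) := by
  have hlim := (aecover_lt_abs_sub (x := x)).integral_tendsto_of_countably_generated hg
  refine (hlim.const_mul (1 / π)).congr' ?_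
  filter_upwards [self_mem_nhdsWithin] with ε hε
  congr 1
  refine setIntegral_congr_fun measurableSet_lt_abs_sub fun y hy => ?_
  exact (mul_div_cancel_left₀ _ (sub_ne_zero_of_lt_abs_sub hε hy)).symm

lemma lt_abs_sub_inter_Icc (hε : 0 < ε) (ha : a ≤ x - ε) (hb : x + ε ≤ b) :
    {y | ε < |x - y|} ∩ Icc a b = Ico a (x - ε) ∪ Ioc (x + ε) b := by
  ext y
  simp only [mem_inter_iff, mem_ofPred_eq, mem_union, mem_Icc, mem_Ico, mem_Ioc, lt_abs]
  grind

lemma setIntegral_lt_abs_sub_indicator_Icc (hf : IntegrableOn f (Icc a b)) (hε : 0 < ε)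
    (ha : a ≤ x - ε) (hb : x + ε ≤ b) :
    ∫ y in {y | ε < |x - y|}, (Icc a b).indicator f y / (x - y) =
      (∫ y in a..x - ε, f y / (x - y)) + ∫ y in x + ε..b, f y / (x - y) := by
  have hdiv : (fun y => (Icc a b).indicator f y / (x - y)) =
      (Icc a b).indicator fun y => f y / (x - y) := by
    ext y
    by_cases hy : y ∈ Icc a b <;> simp [hy]
  have hint : IntegrableOn (fun y => f y / (x - y)) (Ico a (x - ε) ∪ Ioc (x + ε) b) := by
    rw [← lt_abs_sub_inter_Icc hε ha hb, IntegrableOn,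
      ← Measure.restrict_restrict measurableSet_lt_abs_sub]
    exact integrableOn_div_sub_of_integrable hf hε
  have hdisj : Disjoint (Ico a (x - ε)) (Ioc (x + ε) b) :=
    Set.disjoint_left.2 fun y hy hy' => by linarith [hy.2, hy'.1]
  rw [hdiv, setIntegral_indicator measurableSet_Icc, lt_abs_sub_inter_Icc hε ha hb,
    setIntegral_union hdisj measurableSet_Ioc hint.left_of_union hint.right_of_union,
    integral_Ico_eq_integral_Ioc, intervalIntegral.integral_of_le ha,
    intervalIntegral.integral_of_le hb]

lemma hasHilbertTransform_indicator_Icc_one (ha : a < x) (hb : x < b) :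
    HasHilbertTransform ((Icc a b).indicator 1) x ((1 / π) * log ((x - a) / (b - x))) := by
  refine tendsto_const_nhds.congr' ?_
  filter_upwards [Ioc_mem_nhdsGT (lt_min (sub_pos.2 ha) (sub_pos.2 hb))] with ε ⟨hε, hεm⟩
  obtain ⟨hεa, hεb⟩ := le_min_iff.1 hεm
  have hleft : ∫ y in a..x - ε, (1 : ℝ → ℝ) y / (x - y) = log ((x - a) / ε) := by
    simp only [Pi.one_apply, one_div]
    rw [intervalIntegral.integral_comp_sub_left (fun u => u⁻¹) x, sub_sub_cancel,
      integral_inv_of_pos hε (sub_pos.2 ha)]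
  have hright : ∫ y in x + ε..b, (1 : ℝ → ℝ) y / (x - y) = log (ε / (b - x)) := by
    simp only [Pi.one_apply, one_div]
    rw [intervalIntegral.integral_comp_sub_left (fun u => u⁻¹) x, sub_add_cancel_left,
      integral_inv_of_neg (sub_neg.2 hb) (neg_lt_zero.2 hε), ← neg_sub b x, neg_div_neg_eq]
  have hone : IntegrableOn (1 : ℝ → ℝ) (Icc a b) := continuousOn_const.integrableOn_Icc
  rw [setIntegral_lt_abs_sub_indicator_Icc hone hε (by linarith) (by linarith), hleft, hright,
    ← log_mul (div_ne_zero (sub_pos.2 ha).ne' hε.ne') (div_ne_zero hε.ne' (sub_pos.2 hb).ne'),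
    div_mul_div_cancel₀ hε.ne']

theorem hasHilbertTransform_indicator_Icc_of_eq_add_sub_mul (ha : a < x) (hb : x < b)
    (hh : IntegrableOn h (Icc a b)) (hf : ∀ y ∈ Icc a b, f y = c + (x - y) * h y) :
    HasHilbertTransform ((Icc a b).indicator f) x
      ((1 / π) * (c * log ((x - a) / (b - x)) + ∫ y in a..b, h y)) := by
  have hsplit : (Icc a b).indicator f = fun y =>
      c * (Icc a b).indicator 1 y + (x - y) * (Icc a b).indicator h y := by
    ext y
    by_cases hy : y ∈ Icc a b
    · simp [hy, hf y hy]
    · simp [hy]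
  have hone : Integrable ((Icc a b).indicator (1 : ℝ → ℝ)) :=
    continuousOn_const.integrableOn_Icc.integrable_indicator measurableSet_Icc
  have hmul : Integrable fun y => (x - y) * (Icc a b).indicator h y := by
    simp only [← indicator_mul_right]
    exact (hh.continuousOn_mul (by fun_prop) isCompact_Icc).integrable_indicator measurableSet_Icc
  have hint : ∫ y, (Icc a b).indicator h y = ∫ y in a..b, h y := by
    rw [integral_indicator measurableSet_Icc, integral_Icc_eq_integral_Ioc,
      intervalIntegral.integral_of_le (ha.trans hb).le]
  have hone_transform := (hasHilbertTransform_indicator_Icc_one ha hb).const_mul c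
  have hmul_transform :=
    hasHilbertTransform_sub_mul (x := x) (hh.integrable_indicator measurableSet_Icc)
  rw [hint] at hmul_transform
  rw [hsplit, mul_add, mul_left_comm]
  exact hone_transform.add hmul_transform (hone.const_mul c) hmul

end HilbertTransform

section Semicircle

variable {r x y : ℝ}

/-- A primitive in `y` of the regular part `(x + y) / (√(r² - y²) + √(r² - x²))` of
`√(r² - y²) / (x - y)` on `[-r, r]`. With `x = r sin α` and `y = r sin β`, the regular part is
`tan ((α + β) / 2)`, and the argument of the logarithm is `r² (1 + cos (α + β))`. -/
noncomputable def semicirclePrimitive (r x y : ℝ) : ℝ :=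
  x * arcsin (y / r) - √(r ^ 2 - y ^ 2) +
    √(r ^ 2 - x ^ 2) * log (r ^ 2 - x * y + √(r ^ 2 - x ^ 2) * √(r ^ 2 - y ^ 2))

lemma sq_sub_sq_pos (hx : |x| < r) : 0 < r ^ 2 - x ^ 2 :=
  sub_pos.2 (sq_lt_sq' (abs_lt.1 hx).1 (abs_lt.1 hx).2)

lemma sq_sub_mul_add_sqrt_mul_sqrt_pos (hx : |x| < r) (hy : |y| ≤ r) :
    0 < r ^ 2 - x * y + √(r ^ 2 - x ^ 2) * √(r ^ 2 - y ^ 2) := by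
  have hxy : x * y < r ^ 2 := calc
    x * y ≤ |x| * |y| := (le_abs_self _).trans_eq (abs_mul x y)
    _ ≤ |x| * r := by gcongr
    _ < r * r := by gcongr; exact (abs_nonneg x).trans_lt hx
    _ = r ^ 2 := (sq r).symm
  have := mul_nonneg (√(r ^ 2 - x ^ 2)).sqrt_nonneg (√(r ^ 2 - y ^ 2)).sqrt_nonneg
  positivity

lemma continuousOn_semicirclePrimitive (hx : |x| < r) :
    ContinuousOn (semicirclePrimitive r x) (Icc (-r) r) := by
  have hlog : ContinuousOn
      (fun y => log (r ^ 2 - x * y + √(r ^ 2 - x ^ 2) * √(r ^ 2 - y ^ 2))) (Icc (-r) r) :=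
    ContinuousOn.log (by fun_prop) fun y hy =>
      (sq_sub_mul_add_sqrt_mul_sqrt_pos hx (abs_le.2 hy)).ne'
  have hrest : Continuous fun y => x * arcsin (y / r) - √(r ^ 2 - y ^ 2) := by fun_prop
  exact hrest.continuousOn.add (hlog.const_mul _)

lemma hasDerivAt_arcsin_div (hy : |y| < r) :
    HasDerivAt (fun y => arcsin (y / r)) (1 / √(r ^ 2 - y ^ 2)) y := by
  have hr : 0 < r := (abs_nonneg y).trans_lt hy
  have hneg : y / r ≠ -1 := ((lt_div_iff₀ hr).2 (by linarith [(abs_lt.1 hy).1])).ne'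
  have hpos : y / r ≠ 1 := ((div_lt_one hr).2 (abs_lt.1 hy).2).ne
  have hsqrt : √(1 - (y / r) ^ 2) = √(r ^ 2 - y ^ 2) / r := by
    rw [div_pow, one_sub_div (pow_pos hr 2).ne', sqrt_div' _ (sq_nonneg r), sqrt_sq hr.le]
  refine ((hasDerivAt_arcsin hneg hpos).comp y ((hasDerivAt_id y).div_const r)).congr_deriv ?_
  rw [hsqrt, one_div_div, div_mul_div_cancel₀' hr.ne']

lemma hasDerivAt_sqrt_sq_sub_sq (hy : |y| < r) :
    HasDerivAt (fun y => √(r ^ 2 - y ^ 2)) (-y / √(r ^ 2 - y ^ 2)) y := by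
  have h : HasDerivAt (fun y => r ^ 2 - y ^ 2) (-(2 * y)) y := by
    simpa using ((hasDerivAt_id y).pow 2).const_sub (r ^ 2)
  refine (h.sqrt (sq_sub_sq_pos hy).ne').congr_deriv ?_
  rw [← mul_neg, mul_div_mul_left _ _ two_ne_zero]

lemma hasDerivAt_semicirclePrimitive (hx : |x| < r) (hy : |y| < r) :
    HasDerivAt (semicirclePrimitive r x)
      ((x + y) / (√(r ^ 2 - y ^ 2) + √(r ^ 2 - x ^ 2))) y := by
  have hρ := hasDerivAt_sqrt_sq_sub_sq hy
  have hP := sq_sub_mul_add_sqrt_mul_sqrt_pos hx hy.le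
  have hlin : HasDerivAt (fun y => r ^ 2 - x * y) (-x) y := by
    simpa using ((hasDerivAt_id y).const_mul x).const_sub (r ^ 2)
  have hlog := (hlin.add (hρ.const_mul √(r ^ 2 - x ^ 2))).log hP.ne'
  refine ((((hasDerivAt_arcsin_div hy).const_mul x).sub hρ).add
    (hlog.const_mul √(r ^ 2 - x ^ 2))).congr_deriv ?_
  simp only [Pi.add_apply]
  have hρ_pos := sqrt_pos.2 (sq_sub_sq_pos hy)
  have hc_pos := sqrt_pos.2 (sq_sub_sq_pos hx)
  have hρ_sq := sq_sqrt (sq_sub_sq_pos hy).le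
  have hc_sq := sq_sqrt (sq_sub_sq_pos hx).le
  generalize √(r ^ 2 - y ^ 2) = ρ at *
  generalize √(r ^ 2 - x ^ 2) = c at *
  -- `sin (α + β) / (1 + cos (α + β)) = tan ((α + β) / 2)`
  have htan : (x * ρ + c * y) / (r ^ 2 - x * y + c * ρ) = (x + y) / (ρ + c) := by
    rw [div_eq_div_iff hP.ne' (by positivity)]
    linear_combination x * hρ_sq + y * hc_sq
  calc x * (1 / ρ) - -y / ρ + c * ((-x + c * (-y / ρ)) / (r ^ 2 - x * y + c * ρ))
      = (x + y) / ρ - c / ρ * ((x * ρ + c * y) / (r ^ 2 - x * y + c * ρ)) := by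
        field_simp
        ring
    _ = (x + y) / (ρ + c) := by
        rw [htan]
        field_simp
        ring

lemma semicirclePrimitive_sub_semicirclePrimitive_neg (hx : |x| < r) :
    semicirclePrimitive r x r - semicirclePrimitive r x (-r) =
      π * x - √(r ^ 2 - x ^ 2) * log ((x + r) / (r - x)) := by
  obtain ⟨hneg, hpos⟩ := abs_lt.1 hx
  have hr : r ≠ 0 := ((abs_nonneg x).trans_lt hx).ne'
  have hlog_right : log (r ^ 2 - x * r) = log r + log (r - x) := by
    rw [← log_mul hr (sub_pos.2 hpos).ne']
    ring_nf
  have hlog_left : log (r ^ 2 - x * -r) = log r + log (x + r) := by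
    rw [← log_mul hr (by linarith)]
    ring_nf
  rw [log_div (by linarith) (sub_pos.2 hpos).ne']
  simp only [semicirclePrimitive, neg_sq, sub_self, sqrt_zero, mul_zero, add_zero, neg_div,
    div_self hr, arcsin_neg, arcsin_one, hlog_right, hlog_left]
  ring

lemma continuous_add_div_sqrt_add_sqrt (hx : |x| < r) :
    Continuous fun y => (x + y) / (√(r ^ 2 - y ^ 2) + √(r ^ 2 - x ^ 2)) :=
  Continuous.div (by fun_prop) (by fun_prop) fun y =>
    (add_pos_of_nonneg_of_pos (sqrt_nonneg _) (sqrt_pos.2 (sq_sub_sq_pos hx))).ne'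

lemma integral_add_div_sqrt_add_sqrt (hx : |x| < r) :
    ∫ y in -r..r, (x + y) / (√(r ^ 2 - y ^ 2) + √(r ^ 2 - x ^ 2)) =
      π * x - √(r ^ 2 - x ^ 2) * log ((x + r) / (r - x)) := by
  have hr : 0 < r := (abs_nonneg x).trans_lt hx
  rw [← semicirclePrimitive_sub_semicirclePrimitive_neg hx]
  exact intervalIntegral.integral_eq_sub_of_hasDerivAt_of_le (neg_lt_self hr).le
    (continuousOn_semicirclePrimitive hx)
    (fun y hy => hasDerivAt_semicirclePrimitive hx (abs_lt.2 hy))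
    ((continuous_add_div_sqrt_add_sqrt hx).intervalIntegrable _ _)

lemma sqrt_eq_sqrt_add_sub_mul (hx : |x| < r) (hy : |y| ≤ r) :
    √(r ^ 2 - y ^ 2) = √(r ^ 2 - x ^ 2) +
      (x - y) * ((x + y) / (√(r ^ 2 - y ^ 2) + √(r ^ 2 - x ^ 2))) := by
  have hy_nonneg : 0 ≤ r ^ 2 - y ^ 2 := sub_nonneg.2 (sq_le_sq' (abs_le.1 hy).1 (abs_le.1 hy).2)
  have hρ_sq := sq_sqrt hy_nonneg
  have hc_sq := sq_sqrt (sq_sub_sq_pos hx).le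
  have hc_pos := sqrt_pos.2 (sq_sub_sq_pos hx)
  field_simp
  linear_combination hρ_sq - hc_sq

theorem hasHilbertTransform_indicator_Icc_sqrt (hx : |x| < r) :
    HasHilbertTransform ((Icc (-r) r).indicator fun y => √(r ^ 2 - y ^ 2)) x x := by
  have h := hasHilbertTransform_indicator_Icc_of_eq_add_sub_mul (abs_lt.1 hx).1 (abs_lt.1 hx).2
    (continuous_add_div_sqrt_add_sqrt hx).integrableOn_Icc
    fun y hy => sqrt_eq_sqrt_add_sub_mul hx (abs_le.2 hy)
  rwa [integral_add_div_sqrt_add_sqrt hx, sub_neg_eq_add, add_sub_cancel, one_div,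
    inv_mul_cancel_left₀ pi_ne_zero] at h

end Semicircle

/-- For the semicircle density `u(y) = (2/π)·√(s−y²)·χ_{|y|≤√s}` and `|x| < √s`,
the Hilbert transform satisfies `Hu(x) = 2x/π`. -/
theorem hilbert_transform_semicircle (s : ℝ) (hs : 0 < s)
    (x : ℝ) (hx : |x| < Real.sqrt s) :
    HasHilbertTransform
      (Set.indicator {y : ℝ | |y| ≤ Real.sqrt s} fun y => (2 / π) * Real.sqrt (s - y ^ 2))
      x (2 * x / π) := by
  have h := (hasHilbertTransform_indicator_Icc_sqrt hx).const_mul (2 / π)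
  have hset : {y : ℝ | |y| ≤ √s} = Icc (-√s) √s := Set.ext fun y => by
    simp only [mem_ofPred_eq, mem_Icc, abs_le]
  rw [sq_sqrt hs.le, div_mul_eq_mul_div] at h
  rwa [hset, funext (indicator_const_mul _ (fun y => √(s - y ^ 2)) (2 / π))]
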